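/- Let S be a commutative semiring, F an S-semimodule, and 0 → L →f M →g N → 0 a short exact sequence of S-semimodules. Then: (1) if F is M-i-flat (respectively M-e-flat, respectively M-m-flat), then F is L-i-flat (respectively L-e-flat, respectively L-m-flat); (2) if F is M-m-flat (respectively M-i-flat), then F is N-m-flat (respectively N-i-flat). -/

import Mathlib

open TensorProduct

section Defs

/-- An `S`-linear map `f` is *k-normal* if whenever `f m = f m'` there exist
`k, k' ∈ ker f` with `m + k = m' + k'`. -/
def KNormal {S : Type*} [Semiring S] {L M : Type*} [AddCommMonoid L] [AddCommMonoid M]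
    [Module S L] [Module S M] (f : L →ₗ[S] M) : Prop :=
  ∀ m m' : L, f m = f m' → ∃ k k' : L, f k = 0 ∧ f k' = 0 ∧ m + k = m' + k'

/-- An `S`-linear map `f` is *i-normal* if whenever `m + f l = f l'` then `m` is in the
image of `f`. -/
def INormal {S : Type*} [Semiring S] {L M : Type*} [AddCommMonoid L] [AddCommMonoid M]
    [Module S L] [Module S M] (f : L →ₗ[S] M) : Prop :=
  ∀ (m : M) (l l' : L), m + f l = f l' → ∃ x : L, f x = m

/-- An `S`-linear map is *normal* if it is both k-normal and i-normal. -/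
def IsNormalMap {S : Type*} [Semiring S] {L M : Type*} [AddCommMonoid L] [AddCommMonoid M]
    [Module S L] [Module S M] (f : L →ₗ[S] M) : Prop :=
  KNormal f ∧ INormal f

/-- A sequence `L →f M →g N` is *exact* (in the sense of Abuhlail) if `g` is k-normal and
`f(L) = ker g`. -/
def IsExactSeq {S : Type*} [Semiring S] {L M N : Type*}
    [AddCommMonoid L] [AddCommMonoid M] [AddCommMonoid N]
    [Module S L] [Module S M] [Module S N]
    (f : L →ₗ[S] M) (g : M →ₗ[S] N) : Prop :=
  KNormal g ∧ ∀ m : M, g m = 0 ↔ ∃ l : L, f l = m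

/-- A sequence `L →f M →g N` is *semi-exact* if the subtractive closure of `f(L)`
equals `ker g`. -/
def IsSemiExactSeq {S : Type*} [Semiring S] {L M N : Type*}
    [AddCommMonoid L] [AddCommMonoid M] [AddCommMonoid N]
    [Module S L] [Module S M] [Module S N]
    (f : L →ₗ[S] M) (g : M →ₗ[S] N) : Prop :=
  ∀ m : M, g m = 0 ↔ ∃ l l' : L, m + f l = f l'

/-- `0 → L →f M →g N → 0` is a *short exact sequence*: `f` is injective, `f(L) = ker g`,
and `g` is surjective and k-normal. -/
def IsShortExactSeq {S : Type*} [Semiring S] {L M N : Type*}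
    [AddCommMonoid L] [AddCommMonoid M] [AddCommMonoid N]
    [Module S L] [Module S M] [Module S N]
    (f : L →ₗ[S] M) (g : M →ₗ[S] N) : Prop :=
  Function.Injective f ∧ (∀ m : M, g m = 0 ↔ ∃ l : L, f l = m) ∧
    Function.Surjective g ∧ KNormal g

/-- A subset `T` of an additive commutative monoid is *subtractive* if
`m + l ∈ T` and `l ∈ T` imply `m ∈ T`. -/
def SubtractiveSet {M : Type*} [AddCommMonoid M] (T : Set M) : Prop :=
  ∀ m l : M, m + l ∈ T → l ∈ T → m ∈ T

/-- `F` is `M`-m-flat: for every submodule `L ≤ M`, `id_F ⊗ ι_L` is injective. -/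
def MMFlat (S : Type*) [CommSemiring S] (F M : Type*) [AddCommMonoid F] [AddCommMonoid M]
    [Module S F] [Module S M] : Prop :=
  ∀ L : Submodule S M, Function.Injective (LinearMap.lTensor F L.subtype)

/-- `F` is `M`-i-flat: for every subtractive submodule `L ≤ M`, `id_F ⊗ ι_L` is injective. -/
def MIFlat (S : Type*) [CommSemiring S] (F M : Type*) [AddCommMonoid F] [AddCommMonoid M]
    [Module S F] [Module S M] : Prop :=
  ∀ L : Submodule S M, SubtractiveSet (L : Set M) →
    Function.Injective (LinearMap.lTensor F L.subtype)

/-- `F` is `M`-e-flat (normally `M`-flat): for every subtractive submodule `L ≤ M`,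
`id_F ⊗ ι_L` is injective with subtractive image. -/
def MEFlat (S : Type*) [CommSemiring S] (F M : Type*) [AddCommMonoid F] [AddCommMonoid M]
    [Module S F] [Module S M] : Prop :=
  ∀ L : Submodule S M, SubtractiveSet (L : Set M) →
    Function.Injective (LinearMap.lTensor F L.subtype) ∧
      SubtractiveSet (Set.range (LinearMap.lTensor F L.subtype))

/-- `F` is *e-flat*: `F ⊗ -` preserves short exact sequences. -/
def EFlat (S : Type*) [CommSemiring S] (F : Type*) [AddCommMonoid F] [Module S F] : Prop :=
  ∀ (L M N : Type*) [AddCommMonoid L] [AddCommMonoid M] [AddCommMonoid N]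
    [Module S L] [Module S M] [Module S N] (f : L →ₗ[S] M) (g : M →ₗ[S] N),
    IsShortExactSeq f g →
      IsShortExactSeq (LinearMap.lTensor F f) (LinearMap.lTensor F g)

/-- `F` is *m-flat*: `F` is `M`-m-flat for every `S`-semimodule `M`. -/
def MFlatAll (S : Type*) [CommSemiring S] (F : Type*) [AddCommMonoid F] [Module S F] : Prop :=
  ∀ (M : Type*) [AddCommMonoid M] [Module S M] (L : Submodule S M),
    Function.Injective (LinearMap.lTensor F L.subtype)

/-- `A` is `S`-m-flat. -/
def SMFlat (S : Type*) [CommSemiring S] (A : Type*) [AddCommMonoid A] [Module S A] : Prop :=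
  ∀ I : Submodule S S, Function.Injective (LinearMap.lTensor A I.subtype)

/-- `A` is `S`-i-flat. -/
def SIFlat (S : Type*) [CommSemiring S] (A : Type*) [AddCommMonoid A] [Module S A] : Prop :=
  ∀ I : Submodule S S, SubtractiveSet (I : Set S) →
    Function.Injective (LinearMap.lTensor A I.subtype)

/-- `A` is `S`-e-flat. -/
def SEFlat (S : Type*) [CommSemiring S] (A : Type*) [AddCommMonoid A] [Module S A] : Prop :=
  ∀ I : Submodule S S, SubtractiveSet (I : Set S) →
    Function.Injective (LinearMap.lTensor A I.subtype) ∧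
      SubtractiveSet (Set.range (LinearMap.lTensor A I.subtype))

/-- The canonical map `θ_I : A ⊗[S] I → A`, `a ⊗ i ↦ i • a`. -/
noncomputable def thetaI (S : Type*) [CommSemiring S] (A : Type*) [AddCommMonoid A] [Module S A]
    (I : Submodule S S) : TensorProduct S A I →ₗ[S] A :=
  (TensorProduct.rid S A).toLinearMap ∘ₗ LinearMap.lTensor A I.subtype

end Defs

/-!
For an injective `i : K → M`, the map `id_F ⊗ i` differs from `id_F ⊗ ι`, where `ι` is the
inclusion of `i(K)`, by an isomorphism. So flatness of `F` relative to `M` tests all injections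
into `M`, in particular the composites `K ≤ L → M`, which factor through `F ⊗ L`.

For a surjective k-normal `g : M → N`, two tensors in `F ⊗ M` with the same image in `F ⊗ N`
become equal after adding elements coming from `F ⊗ ker g`: the quotient of `F ⊗ M` by this relation
receives a map from `F ⊗ N`. For `K ≤ N`, an equality in `F ⊗ N` of two elements of `F ⊗ K` thus
lifts to `F ⊗ M`; it descends to `F ⊗ g⁻¹(K)` by flatness, and in `F ⊗ K` the terms from
`F ⊗ ker g` vanish.
-/

section Subtractive

variable {M N G : Type*} [AddCommMonoid M] [AddCommMonoid N] [FunLike G M N]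

theorem SubtractiveSet.preimage [AddHomClass G M N] {T : Set N} (hT : SubtractiveSet T) (φ : G) :
    SubtractiveSet (φ ⁻¹' T) :=
  fun m l hml hl => hT (φ m) (φ l) (by rwa [← map_add]) hl

theorem SubtractiveSet.image [AddHomClass G M N] {T : Set M} (hT : SubtractiveSet T) {φ : G}
    (hφ : Function.Injective φ) (hrange : SubtractiveSet (Set.range φ)) :
    SubtractiveSet (φ '' T) := by
  rintro n _ ⟨t', ht', htn⟩ ⟨t, ht, rfl⟩
  obtain ⟨m, rfl⟩ := hrange n (φ t) ⟨t', htn⟩ ⟨t, rfl⟩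
  have hmt : t' = m + t := hφ (by rw [htn, map_add])
  exact ⟨m, hT m t (hmt ▸ ht') ht, rfl⟩

theorem subtractiveSet_singleton_zero : SubtractiveSet ({0} : Set M) := by
  rintro m l hml rfl
  simpa only [add_zero] using hml

end Subtractive

section Injective

variable {S F L M : Type*} [CommSemiring S] [AddCommMonoid F] [AddCommMonoid L] [AddCommMonoid M]
  [Module S F] [Module S L] [Module S M] {f : L →ₗ[S] M}

theorem lTensor_range_subtype_comp_ofInjective (hf : Function.Injective f) :
    f.range.subtype.lTensor F ∘ₗ ((LinearEquiv.ofInjective f hf).lTensor F).toLinearMap =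
      f.lTensor F := by
  rw [LinearEquiv.coe_lTensor, ← LinearMap.lTensor_comp]
  rfl

theorem lTensor_injective_iff_range_subtype (hf : Function.Injective f) :
    Function.Injective (f.lTensor F) ↔ Function.Injective (f.range.subtype.lTensor F) := by
  rw [← lTensor_range_subtype_comp_ofInjective hf]
  exact EquivLike.injective_comp ((LinearEquiv.ofInjective f hf).lTensor F) _

theorem range_lTensor_range_subtype (hf : Function.Injective f) :
    Set.range (f.range.subtype.lTensor F) = Set.range (f.lTensor F) := by
  rw [← lTensor_range_subtype_comp_ofInjective hf]
  exact (EquivLike.range_comp _ ((LinearEquiv.ofInjective f hf).lTensor F)).symm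

theorem MMFlat.lTensor_injective (h : MMFlat S F M) (hf : Function.Injective f) :
    Function.Injective (f.lTensor F) :=
  (lTensor_injective_iff_range_subtype hf).2 (h _)

theorem MIFlat.lTensor_injective (h : MIFlat S F M) (hf : Function.Injective f)
    (hrange : SubtractiveSet (Set.range f)) : Function.Injective (f.lTensor F) :=
  (lTensor_injective_iff_range_subtype hf).2 (h _ hrange)

theorem MEFlat.miFlat (h : MEFlat S F M) : MIFlat S F M :=
  fun K hK => (h K hK).1

theorem MEFlat.subtractiveSet_range_lTensor (h : MEFlat S F M) (hf : Function.Injective f)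
    (hrange : SubtractiveSet (Set.range f)) : SubtractiveSet (Set.range (f.lTensor F)) :=
  range_lTensor_range_subtype (F := F) hf ▸ (h _ hrange).2

theorem SubtractiveSet.range_comp_subtype {K : Submodule S L} (hK : SubtractiveSet (K : Set L))
    (hf : Function.Injective f) (hrange : SubtractiveSet (Set.range f)) :
    SubtractiveSet (Set.range (f ∘ₗ K.subtype)) := by
  rw [LinearMap.coe_comp, Set.range_comp, Submodule.coe_subtype, Subtype.range_coe]
  exact hK.image hf hrange

theorem lTensor_injective_of_comp {K : Type*} [AddCommMonoid K] [Module S K] {i : K →ₗ[S] L}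
    (h : Function.Injective ((f ∘ₗ i).lTensor F)) : Function.Injective (i.lTensor F) := by
  rw [LinearMap.lTensor_comp] at h
  exact Function.Injective.of_comp h

theorem MMFlat.of_injective (h : MMFlat S F M) (hf : Function.Injective f) : MMFlat S F L :=
  fun K => lTensor_injective_of_comp (f := f) (h.lTensor_injective (hf.comp K.injective_subtype))

theorem MIFlat.of_injective (h : MIFlat S F M) (hf : Function.Injective f)
    (hrange : SubtractiveSet (Set.range f)) : MIFlat S F L :=
  fun K hK => lTensor_injective_of_comp (f := f)
    (h.lTensor_injective (hf.comp K.injective_subtype) (hK.range_comp_subtype hf hrange))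

theorem MEFlat.of_injective (h : MEFlat S F M) (hf : Function.Injective f)
    (hrange : SubtractiveSet (Set.range f)) : MEFlat S F L := by
  intro K hK
  have hsub : SubtractiveSet (Set.range ((f ∘ₗ K.subtype).lTensor F)) :=
    h.subtractiveSet_range_lTensor (hf.comp K.injective_subtype) (hK.range_comp_subtype hf hrange)
  have hpre : f.lTensor F ⁻¹' Set.range ((f ∘ₗ K.subtype).lTensor F) =
      Set.range (K.subtype.lTensor F) := by
    rw [LinearMap.lTensor_comp, LinearMap.coe_comp, Set.range_comp]
    exact (h.miFlat.lTensor_injective hf hrange).preimage_image _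
  exact ⟨h.miFlat.of_injective hf hrange K hK, hpre ▸ hsub.preimage (f.lTensor F)⟩

end Injective

section Bourne

variable {S M N Q : Type*} [Semiring S] [AddCommMonoid M] [AddCommMonoid N] [AddCommMonoid Q]
  [Module S M] [Module S N] [Module S Q]

/-- The Bourne relation of a submodule `P`: two elements are related if they become equal after
adding elements of `P`. It replaces `m - m' ∈ P` in the absence of subtraction. -/
def BourneRel (P : Submodule S M) (m m' : M) : Prop :=
  ∃ p ∈ P, ∃ p' ∈ P, m + p = m' + p'

theorem KNormal.bourneRel_ker {g : M →ₗ[S] N} (hg : KNormal g) {m m' : M} (h : g m = g m') :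
    BourneRel g.ker m m' :=
  let ⟨k, k', hk, hk', hkk'⟩ := hg m m' h
  ⟨k, hk, k', hk', hkk'⟩

theorem BourneRel.map {P : Submodule S M} {m m' : M} (h : BourneRel P m m') {φ : M →ₗ[S] N}
    {R : Submodule S N} (hφ : P ≤ R.comap φ) : BourneRel R (φ m) (φ m') := by
  obtain ⟨p, hp, p', hp', hpp'⟩ := h
  exact ⟨φ p, hφ hp, φ p', hφ hp', by rw [← map_add, hpp', map_add]⟩

/-- The Bourne relation of `P` as a congruence, whose quotient is the quotient semimodule of `M`
by `P`. -/
def bourneCon (P : Submodule S M) : ModuleCon S M where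
  r := BourneRel P
  iseqv :=
    { refl := fun m => ⟨0, P.zero_mem, 0, P.zero_mem, rfl⟩
      symm := fun ⟨p, hp, p', hp', h⟩ => ⟨p', hp', p, hp, h.symm⟩
      trans := by
        rintro a b c ⟨p, hp, p', hp', hab⟩ ⟨q, hq, q', hq', hbc⟩
        refine ⟨p + q, P.add_mem hp hq, q' + p', P.add_mem hq' hp', ?_⟩
        rw [← add_assoc, hab, add_right_comm, hbc, add_assoc] }
  add' := by
    rintro a b c d ⟨p, hp, p', hp', hab⟩ ⟨q, hq, q', hq', hcd⟩
    refine ⟨p + q, P.add_mem hp hq, p' + q', P.add_mem hp' hq', ?_⟩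
    rw [add_add_add_comm, hab, hcd, add_add_add_comm]
  smul := by
    rintro s a b ⟨p, hp, p', hp', hab⟩
    refine ⟨s • p, P.smul_mem s hp, s • p', P.smul_mem s hp', ?_⟩
    rw [← smul_add, hab, smul_add]

/-- The projection of `M` onto its quotient by the Bourne congruence of `P`. -/
def bourneMk (P : Submodule S M) : M →ₗ[S] (bourneCon P).Quotient where
  __ := (bourneCon P).mk'
  map_smul' _ _ := rfl

theorem bourneMk_eq_iff {P : Submodule S M} {m m' : M} :
    bourneMk P m = bourneMk P m' ↔ BourneRel P m m' :=
  (bourneCon P).toAddCon.eq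

theorem exists_linearMap_comp_eq_of_surjective {g : M →ₗ[S] N} (hg : Function.Surjective g)
    {φ : M →ₗ[S] Q} (hφ : ∀ m m', g m = g m' → φ m = φ m') : ∃ ψ : N →ₗ[S] Q, ψ ∘ₗ g = φ := by
  have hinv := Function.surjInv_eq hg
  refine ⟨{ toFun := fun n => φ (Function.surjInv hg n), map_add' := ?_, map_smul' := ?_ }, ?_⟩
  · intro n n'
    rw [← map_add]
    exact hφ _ _ (by simp only [map_add, hinv])
  · intro s n
    rw [RingHom.id_apply, ← map_smul]
    exact hφ _ _ (by simp only [map_smul, hinv])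
  · exact LinearMap.ext fun m => hφ _ _ (hinv (g m))

end Bourne

section Surjective

variable {S F M N Q : Type*} [CommSemiring S] [AddCommMonoid F] [AddCommMonoid M]
  [AddCommMonoid N] [AddCommMonoid Q] [Module S F] [Module S M] [Module S N] [Module S Q]
  {g : M →ₗ[S] N}

theorem exists_comp_lTensor_eq_of_surjective (hg : Function.Surjective g) {φ : F ⊗[S] M →ₗ[S] Q}
    (hφ : ∀ a m m', g m = g m' → φ (a ⊗ₜ m) = φ (a ⊗ₜ m')) :
    ∃ ψ : F ⊗[S] N →ₗ[S] Q, ψ ∘ₗ g.lTensor F = φ := by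
  obtain ⟨ψ, hψ⟩ := exists_linearMap_comp_eq_of_surjective hg
    (φ := (TensorProduct.curry φ).flip) fun m m' h => LinearMap.ext fun a => hφ a m m' h
  refine ⟨TensorProduct.lift ψ.flip, TensorProduct.ext' fun a m => ?_⟩
  exact LinearMap.congr_fun (LinearMap.congr_fun hψ m) a

theorem KNormal.bourneRel_range_lTensor (hn : KNormal g) (hg : Function.Surjective g)
    {u v : F ⊗[S] M} (huv : g.lTensor F u = g.lTensor F v) :
    BourneRel (g.ker.subtype.lTensor F).range u v := by
  set P := (g.ker.subtype.lTensor F).range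
  have hker (a : F) : g.ker ≤ P.comap (TensorProduct.mk S F M a) :=
    fun k hk => ⟨a ⊗ₜ ⟨k, hk⟩, rfl⟩
  obtain ⟨ψ, hψ⟩ := exists_comp_lTensor_eq_of_surjective hg (φ := bourneMk P)
    fun a m m' h => bourneMk_eq_iff.2 ((hn.bourneRel_ker h).map (hker a))
  rw [← bourneMk_eq_iff, ← hψ, LinearMap.comp_apply, huv, LinearMap.comp_apply]

theorem lTensor_subtype_injective_of_comap (hg : Function.Surjective g) (hn : KNormal g)
    {K : Submodule S N} (h : Function.Injective ((K.comap g).subtype.lTensor F)) :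
    Function.Injective (K.subtype.lTensor F) := by
  let p : K.comap g →ₗ[S] K := g.submoduleComap K
  let j : g.ker →ₗ[S] K.comap g := Submodule.inclusion (LinearMap.ker_le_comap g)
  have hp (w) : K.subtype.lTensor F (p.lTensor F w) =
      g.lTensor F ((K.comap g).subtype.lTensor F w) := by
    rw [← LinearMap.lTensor_comp_apply, ← LinearMap.lTensor_comp_apply]
    rfl
  have hj (z) : g.ker.subtype.lTensor F z = (K.comap g).subtype.lTensor F (j.lTensor F z) := by
    rw [← LinearMap.lTensor_comp_apply]
    rfl
  have hpj (z) : p.lTensor F (j.lTensor F z) = 0 := by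
    have hzero : p ∘ₗ j = 0 := LinearMap.ext fun k => Subtype.ext k.2
    rw [← LinearMap.lTensor_comp_apply, hzero, LinearMap.lTensor_zero, LinearMap.zero_apply]
  have hsurj : Function.Surjective (p.lTensor F) :=
    LinearMap.lTensor_surjective F (g.submoduleComap_surjective_of_surjective K hg)
  intro x y hxy
  obtain ⟨x, rfl⟩ := hsurj x
  obtain ⟨y, rfl⟩ := hsurj y
  rw [hp, hp] at hxy
  obtain ⟨_, ⟨z, rfl⟩, _, ⟨z', rfl⟩, hz⟩ := hn.bourneRel_range_lTensor hg hxy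
  have hcomap : x + j.lTensor F z = y + j.lTensor F z' :=
    h (by rw [map_add, map_add, ← hj, ← hj, hz])
  simpa only [map_add, hpj, add_zero] using congrArg (p.lTensor F) hcomap

theorem MMFlat.of_surjective (h : MMFlat S F M) (hg : Function.Surjective g) (hn : KNormal g) :
    MMFlat S F N :=
  fun _ => lTensor_subtype_injective_of_comap hg hn (h _)

theorem MIFlat.of_surjective (h : MIFlat S F M) (hg : Function.Surjective g) (hn : KNormal g) :
    MIFlat S F N :=
  fun _ hK => lTensor_subtype_injective_of_comap hg hn (h _ (hK.preimage g))

end Surjective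

/-- relative flatness passes from the middle term of a short exact
sequence to the kernel term, and m- or i-flatness also to the cokernel term. -/
theorem stmt12 {S F L M N : Type*} [CommSemiring S]
    [AddCommMonoid F] [AddCommMonoid L] [AddCommMonoid M] [AddCommMonoid N]
    [Module S F] [Module S L] [Module S M] [Module S N]
    (f : L →ₗ[S] M) (g : M →ₗ[S] N) (hses : IsShortExactSeq f g) :
    ((MIFlat S F M → MIFlat S F L) ∧
      (MEFlat S F M → MEFlat S F L) ∧
      (MMFlat S F M → MMFlat S F L)) ∧
    ((MMFlat S F M → MMFlat S F N) ∧
      (MIFlat S F M → MIFlat S F N)) := by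
  obtain ⟨hf, hker, hg, hn⟩ := hses
  have hrange : SubtractiveSet (Set.range f) :=
    (Set.ext hker : g ⁻¹' {0} = Set.range f) ▸ subtractiveSet_singleton_zero.preimage g
  exact ⟨⟨fun h => h.of_injective hf hrange, fun h => h.of_injective hf hrange,
    fun h => h.of_injective hf⟩, fun h => h.of_surjective hg hn, fun h => h.of_surjective hg hn⟩
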